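/- arXiv:2105.01178 — 6 statements merged into one kernel-verified Lean document; each statement's English description precedes it below -/
import Mathlib

section
/- Let n ≥ 1, let a, b : Fin n → ℝ be vectors with strictly positive entries, let A = diag(a) and B = diag(b) be the corresponding diagonal matrices, and let S be an n×n real symmetric matrix with strictly positive entries. Then for every s ∈ (0,1), ‖Aˢ B^{1-s} S B^{1-s} Aˢ‖_{ℓ²→ℓ²} ≤ s·‖A S A‖_{ℓ²→ℓ²} + (1-s)·‖B S B‖_{ℓ²→ℓ²}, where Aˢ denotes the diagonal matrix with entries aᵢˢ. -/
open scoped BigOperators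

/-- The `ℓ² → ℓ²` operator norm of a real square matrix. -/
noncomputable def l2OpNorm {n : ℕ} (A : Matrix (Fin n) (Fin n) ℝ) : ℝ :=
  ‖Matrix.toEuclideanCLM (𝕜 := ℝ) A‖

/-!
Let `M` be the product matrix on the left-hand side of `stmt0`; then
`M i j = (a i * a j) ^ s * (b i * b j) ^ (1 - s) * S i j`, so by the
weighted AM-GM inequality `0 ≤ M ≤ s • (A S A) + (1 - s) • (B S B)` entrywise. The `ℓ²` operator norm
is monotone on entrywise nonnegative matrices (`l2OpNorm_mono`), because `|M x| ≤ N |x|`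
coordinatewise when `0 ≤ M ≤ N`, and `|x|` has the same Euclidean norm as `x`. The triangle
inequality then gives the claim.
-/

theorem l2OpNorm_mono {n : ℕ} {M N : Matrix (Fin n) (Fin n) ℝ}
    (h0 : ∀ i j, 0 ≤ M i j) (h : ∀ i j, M i j ≤ N i j) : l2OpNorm M ≤ l2OpNorm N := by
  unfold l2OpNorm
  refine ContinuousLinearMap.opNorm_le_bound _ (norm_nonneg _) fun x => ?_
  let y : EuclideanSpace ℝ (Fin n) := WithLp.toLp 2 fun i => |x i|
  have hy : ‖y‖ = ‖x‖ := by
    simp [y, EuclideanSpace.norm_eq]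
  have hxy : ‖Matrix.toEuclideanCLM (𝕜 := ℝ) M x‖ ≤ ‖Matrix.toEuclideanCLM (𝕜 := ℝ) N y‖ := by
    rw [EuclideanSpace.norm_eq, EuclideanSpace.norm_eq]
    refine Real.sqrt_le_sqrt (Finset.sum_le_sum fun i _ => ?_)
    refine pow_le_pow_left₀ (norm_nonneg _) ?_ 2
    refine le_trans ?_ (le_abs_self _)
    simp only [Matrix.ofLp_toEuclideanCLM, Matrix.mulVec, dotProduct, Real.norm_eq_abs, y]
    refine (Finset.abs_sum_le_sum_abs _ _).trans (Finset.sum_le_sum fun j _ => ?_)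
    rw [abs_mul, abs_of_nonneg (h0 i j)]
    exact mul_le_mul_of_nonneg_right (h i j) (abs_nonneg _)
  calc _ ≤ _ := hxy
    _ ≤ _ := ContinuousLinearMap.le_opNorm _ y
    _ = _ := by rw [hy]

theorem l2OpNorm_add_le {n : ℕ} (M N : Matrix (Fin n) (Fin n) ℝ) :
    l2OpNorm (M + N) ≤ l2OpNorm M + l2OpNorm N := by
  unfold l2OpNorm
  rw [map_add]
  exact norm_add_le _ _

theorem l2OpNorm_smul {n : ℕ} {c : ℝ} (hc : 0 ≤ c) (M : Matrix (Fin n) (Fin n) ℝ) :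
    l2OpNorm (c • M) = c * l2OpNorm M := by
  unfold l2OpNorm
  rw [map_smul, norm_smul, Real.norm_of_nonneg hc]

theorem stmt0 (n : ℕ) (hn : 1 ≤ n) (a b : Fin n → ℝ)
    (ha : ∀ i, 0 < a i) (hb : ∀ i, 0 < b i)
    (S : Matrix (Fin n) (Fin n) ℝ) (hSsymm : S.IsSymm) (hSpos : ∀ i j, 0 < S i j)
    (s : ℝ) (hs : s ∈ Set.Ioo (0 : ℝ) 1) :
    l2OpNorm (Matrix.diagonal (fun i => a i ^ s) * Matrix.diagonal (fun i => b i ^ (1 - s)) *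
        S * Matrix.diagonal (fun i => b i ^ (1 - s)) * Matrix.diagonal (fun i => a i ^ s)) ≤
      s * l2OpNorm (Matrix.diagonal a * S * Matrix.diagonal a) +
        (1 - s) * l2OpNorm (Matrix.diagonal b * S * Matrix.diagonal b) := by
  obtain ⟨hs0, hs1⟩ := hs
  have hs1' : 0 ≤ 1 - s := by linarith
  rw [← l2OpNorm_smul hs0.le, ← l2OpNorm_smul hs1']
  refine le_trans (l2OpNorm_mono (fun i j => ?_) fun i j => ?_) (l2OpNorm_add_le _ _)
  · simp only [Matrix.diagonal_mul_diagonal, Matrix.mul_diagonal, Matrix.diagonal_mul]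
    have := ha i; have := ha j; have := hb i; have := hb j; have := hSpos i j
    positivity
  · simp only [Matrix.diagonal_mul_diagonal, Matrix.mul_diagonal, Matrix.diagonal_mul,
      Matrix.add_apply, Matrix.smul_apply, smul_eq_mul]
    have hamgm := Real.geom_mean_le_arith_mean2_weighted hs0.le hs1'
      (mul_pos (ha i) (ha j)).le (mul_pos (hb i) (hb j)).le (by ring)
    rw [Real.mul_rpow (ha i).le (ha j).le, Real.mul_rpow (hb i).le (hb j).le] at hamgm
    have := mul_le_mul_of_nonneg_right hamgm (hSpos i j).le
    linarith
end

section
/- Let X and Y be n×n real symmetric matrices, let λ, μ ∈ ℝ, and let v, w ∈ ℝⁿ satisfy X v = λ v, Y w = μ w, and ‖v‖₂ = ‖w‖₂ = 1. Then λ − μ = vᵀ(X − Y)v + (v − w)ᵀ(Y − μ·I)(v − w). -/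
open Matrix

/-!
Since `w` lies in the kernel of `Y - mu • 1`, and this matrix is symmetric, replacing `v` by `v - w`
does not change its quadratic form: the last term equals `vᵀ (Y - mu • 1) v = vᵀ Y v - mu`. Adding
`vᵀ (X - Y) v = lam - vᵀ Y v` gives `lam - mu`.
-/

theorem stmt5 (n : ℕ) (X Y : Matrix (Fin n) (Fin n) ℝ)
    (hX : X.IsSymm) (hY : Y.IsSymm) (lam mu : ℝ) (v w : Fin n → ℝ)
    (hv : X.mulVec v = lam • v) (hw : Y.mulVec w = mu • w)
    (hvn : ∑ i, v i ^ 2 = 1) (hwn : ∑ i, w i ^ 2 = 1) :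
    lam - mu = v ⬝ᵥ ((X - Y).mulVec v) + (v - w) ⬝ᵥ ((Y - mu • 1).mulVec (v - w)) := by
  have hvv : v ⬝ᵥ v = 1 := by simpa [dotProduct, sq] using hvn
  have hwY : w ⬝ᵥ Y.mulVec v = mu * (w ⬝ᵥ v) := by
    rw [dotProduct_mulVec, ← mulVec_transpose, hY.eq, hw, smul_dotProduct, smul_eq_mul]
  have hker : (Y - mu • 1).mulVec (v - w) = Y.mulVec v - mu • v := by
    rw [mulVec_sub, sub_mulVec, sub_mulVec, hw]
    simp [smul_mulVec]
  rw [hker, sub_mulVec, hv]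
  simp only [dotProduct_sub, sub_dotProduct, dotProduct_smul, smul_eq_mul, hvv, hwY]
  ring
end

section
/- Let A and B be n×n real symmetric matrices, let λ, μ ∈ ℝ and v, w ∈ ℝⁿ with A v = λ v, B w = μ w, ‖v‖₂ = ‖w‖₂ = 1, and ⟨v, w⟩ ≥ 0. Suppose g > 0 is such that ‖(B − μ·I)u‖₂ ≥ g·‖u‖₂ for every u ∈ ℝⁿ with ⟨u, w⟩ = 0. Then ‖v − ⟨w, v⟩·w‖₂ ≤ (‖A − B‖_{ℓ²→ℓ²} + |λ − μ|)/g, and consequently ‖v − w‖₂ ≤ √2 · (‖A − B‖_{ℓ²→ℓ²} + |λ − μ|)/g. -/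
/-!
This is the sin Θ argument for a single eigenvector. The component `u = v - ⟨w, v⟩ w` of `v`
orthogonal to `w` satisfies `(B - μ) u = (B - μ) v = (λ - μ) v - (A - B) v`, because `B - μ`
annihilates `w`; the right-hand side has norm at most `‖A - B‖ + |λ - μ|`, and the gap hypothesis
turns this into the bound on `‖u‖`. For the second bound put `c = ⟨v, w⟩ ∈ [0, 1]`: then
`‖v - w‖² = 2 (1 - c) ≤ 2 (1 - c) (1 + c) = 2 ‖u‖²`.
-/

open Matrix

/-- The Euclidean norm of a vector in `ℝⁿ`. -/
noncomputable def euclNorm {n : ℕ} (v : Fin n → ℝ) : ℝ :=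
  Real.sqrt (∑ i, v i ^ 2)

theorem euclNorm_eq_norm {n : ℕ} (v : Fin n → ℝ) : euclNorm v = ‖WithLp.toLp 2 v‖ := by
  simp [euclNorm, EuclideanSpace.norm_eq]

theorem euclNorm_sq {n : ℕ} (v : Fin n → ℝ) : euclNorm v ^ 2 = v ⬝ᵥ v := by
  rw [euclNorm, Real.sq_sqrt (Finset.sum_nonneg fun i _ => sq_nonneg _)]
  simp [dotProduct, sq]

theorem euclNorm_smul {n : ℕ} (c : ℝ) (v : Fin n → ℝ) :
    euclNorm (c • v) = |c| * euclNorm v := by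
  simp [euclNorm_eq_norm, norm_smul]

theorem euclNorm_sub_le {n : ℕ} (v w : Fin n → ℝ) :
    euclNorm (v - w) ≤ euclNorm v + euclNorm w := by
  simpa [euclNorm_eq_norm] using norm_sub_le (WithLp.toLp 2 v) (WithLp.toLp 2 w)

theorem euclNorm_mulVec_le {n : ℕ} (A : Matrix (Fin n) (Fin n) ℝ) (v : Fin n → ℝ) :
    euclNorm (A.mulVec v) ≤ l2OpNorm A * euclNorm v := by
  have h := (Matrix.toEuclideanCLM (𝕜 := ℝ) A).le_opNorm (WithLp.toLp 2 v)
  rw [Matrix.toEuclideanCLM_toLp] at h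
  simpa only [euclNorm_eq_norm, l2OpNorm] using h

theorem stmt6 (n : ℕ) (A B : Matrix (Fin n) (Fin n) ℝ)
    (hA : A.IsSymm) (hB : B.IsSymm) (lam mu : ℝ) (v w : Fin n → ℝ)
    (hv : A.mulVec v = lam • v) (hw : B.mulVec w = mu • w)
    (hvn : euclNorm v = 1) (hwn : euclNorm w = 1)
    (hvw : 0 ≤ v ⬝ᵥ w) (g : ℝ) (hg : 0 < g)
    (hgap : ∀ u : Fin n → ℝ, u ⬝ᵥ w = 0 →
      g * euclNorm u ≤ euclNorm ((B - mu • 1).mulVec u)) :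
    euclNorm (v - (w ⬝ᵥ v) • w) ≤ (l2OpNorm (A - B) + |lam - mu|) / g ∧
      euclNorm (v - w) ≤ Real.sqrt 2 * (l2OpNorm (A - B) + |lam - mu|) / g := by
  have hvv : v ⬝ᵥ v = 1 := by rw [← euclNorm_sq, hvn, one_pow]
  have hww : w ⬝ᵥ w = 1 := by rw [← euclNorm_sq, hwn, one_pow]
  have hcomm : w ⬝ᵥ v = v ⬝ᵥ w := dotProduct_comm w v
  have hperp : (v - (w ⬝ᵥ v) • w) ⬝ᵥ w = 0 := by
    simp [sub_dotProduct, hww, hcomm]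
  have hresid : (B - mu • 1).mulVec (v - (w ⬝ᵥ v) • w)
      = (lam - mu) • v - (A - B).mulVec v := by
    simp only [mulVec_sub, sub_mulVec, mulVec_smul, smul_mulVec, one_mulVec, hv, hw]
    module
  have hfirst : euclNorm (v - (w ⬝ᵥ v) • w) ≤ (l2OpNorm (A - B) + |lam - mu|) / g := by
    rw [le_div_iff₀ hg]
    have h1 := hgap _ hperp
    have h2 := euclNorm_sub_le ((lam - mu) • v) ((A - B).mulVec v)
    have h3 := euclNorm_mulVec_le (A - B) v
    rw [euclNorm_smul, hvn] at h2
    rw [hvn] at h3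
    rw [hresid] at h1
    linarith
  refine ⟨hfirst, ?_⟩
  have hu : euclNorm (v - (w ⬝ᵥ v) • w) ^ 2 = 1 - (v ⬝ᵥ w) ^ 2 := by
    rw [euclNorm_sq]
    simp only [sub_dotProduct, dotProduct_sub, smul_dotProduct, dotProduct_smul, smul_eq_mul,
      hvv, hww, hcomm]
    ring
  have hd : euclNorm (v - w) ^ 2 = 2 - 2 * (v ⬝ᵥ w) := by
    rw [euclNorm_sq]
    simp only [sub_dotProduct, dotProduct_sub, hvv, hww, hcomm]
    ring
  have hc : v ⬝ᵥ w ≤ 1 := by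
    nlinarith [sq_nonneg (euclNorm (v - w))]
  have hcompare : euclNorm (v - w) ≤ Real.sqrt 2 * euclNorm (v - (w ⬝ᵥ v) • w) := by
    have hu0 : 0 ≤ euclNorm (v - (w ⬝ᵥ v) • w) := Real.sqrt_nonneg _
    refine (abs_le_of_sq_le_sq' ?_ (mul_nonneg (Real.sqrt_nonneg _) hu0)).2
    rw [mul_pow, Real.sq_sqrt zero_le_two, hu, hd]
    nlinarith
  rw [mul_div_assoc]
  exact hcompare.trans (mul_le_mul_of_nonneg_left hfirst (Real.sqrt_nonneg _))
end

section
/- Let S be an n×n complex matrix and let a₁, a₂, d₁, d₂ ∈ ℂⁿ with all entries of a₁ and a₂ nonzero. Set M₁ = diag(a₁), M₂ = diag(a₂), D₁ = diag(d₁), D₂ = diag(d₂), and suppose I − S·M₁·M₂ is invertible. Then tr(D₁ M₁⁻¹ (I − S M₁ M₂)⁻¹ S M₁ D₂ (I − S M₁ M₂)⁻¹) = tr(D₂ M₂⁻¹ (I − S M₁ M₂)⁻¹ S M₂ D₁ (I − S M₁ M₂)⁻¹); that is, the expression is symmetric under simultaneously exchanging (M₁, D₁) with (M₂, D₂) (note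 M₁M₂ = M₂M₁ since both are diagonal). -/
/-!
Write `M₁, M₂, D₁, D₂` for the diagonal matrices and `R = (1 - S M₁ M₂)⁻¹`. From
`R (1 - S M₁ M₂) = 1` one gets `R S M₁ = (R - 1) M₂⁻¹` and, since `M₁` and `M₂` commute,
`R S M₂ = (R - 1) M₁⁻¹`. With `A = D₁ M₁⁻¹` and `B = D₂ M₂⁻¹`, which are diagonal, the claim
becomes `tr (A (R - 1) B R) = tr (B (R - 1) A R)`. Expanding, `tr (A R B R) = tr (B R A R)` by
cyclicity of the trace, and `A B R = B A R` because diagonal matrices commute.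
-/

open Matrix in
/-- If `R` is a left inverse of `1 - S * diagonal a * diagonal b`, the product
`R * S * diagonal a * diagonal d` is expressed through `R` and diagonal matrices alone. -/
theorem resolvent_mul_diagonal {n : ℕ} {S R : Matrix (Fin n) (Fin n) ℂ} {a b : Fin n → ℂ}
    (d : Fin n → ℂ) (hb : ∀ i, b i ≠ 0) (hR : R * (1 - S * diagonal a * diagonal b) = 1) :
    R * S * diagonal a * diagonal d = (R - 1) * diagonal (fun i => d i * (b i)⁻¹) := by
  have h : R - 1 = R * S * diagonal a * diagonal b := by
    rw [← hR]
    noncomm_ring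
  have hd : (fun i => b i * (d i * (b i)⁻¹)) = d := by
    funext i
    field_simp [hb i]
  rw [h, Matrix.mul_assoc _ (diagonal b), diagonal_mul_diagonal, hd]

open Matrix in
theorem trace_diagonal_resolvent_comm {n : ℕ} (R : Matrix (Fin n) (Fin n) ℂ)
    (u v : Fin n → ℂ) :
    trace (diagonal u * ((R - 1) * diagonal v) * R) =
      trace (diagonal v * ((R - 1) * diagonal u) * R) := by
  have expand (u v : Fin n → ℂ) : diagonal u * ((R - 1) * diagonal v) * R =
      diagonal u * R * (diagonal v * R) - diagonal u * diagonal v * R := by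
    noncomm_ring
  rw [expand, expand, trace_sub, trace_sub, trace_mul_comm (diagonal u * R),
    (commute_diagonal u v).eq]

theorem stmt13 (n : ℕ) (S : Matrix (Fin n) (Fin n) ℂ) (a₁ a₂ d₁ d₂ : Fin n → ℂ)
    (ha₁ : ∀ i, a₁ i ≠ 0) (ha₂ : ∀ i, a₂ i ≠ 0)
    (hinv : IsUnit (1 - S * Matrix.diagonal a₁ * Matrix.diagonal a₂)) :
    Matrix.trace (Matrix.diagonal d₁ * Matrix.diagonal (fun i => (a₁ i)⁻¹) *
        (1 - S * Matrix.diagonal a₁ * Matrix.diagonal a₂)⁻¹ * S * Matrix.diagonal a₁ *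
        Matrix.diagonal d₂ * (1 - S * Matrix.diagonal a₁ * Matrix.diagonal a₂)⁻¹) =
      Matrix.trace (Matrix.diagonal d₂ * Matrix.diagonal (fun i => (a₂ i)⁻¹) *
        (1 - S * Matrix.diagonal a₁ * Matrix.diagonal a₂)⁻¹ * S * Matrix.diagonal a₂ *
        Matrix.diagonal d₁ * (1 - S * Matrix.diagonal a₁ * Matrix.diagonal a₂)⁻¹) := by
  have hR := Matrix.nonsing_inv_mul _ ((Matrix.isUnit_iff_isUnit_det _).mp hinv)
  generalize (1 - S * Matrix.diagonal a₁ * Matrix.diagonal a₂)⁻¹ = R at hR ⊢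
  have hR' : R * (1 - S * Matrix.diagonal a₂ * Matrix.diagonal a₁) = 1 := by
    rw [Matrix.mul_assoc S, (Matrix.commute_diagonal a₂ a₁).eq, ← Matrix.mul_assoc S, hR]
  have h₁ := resolvent_mul_diagonal d₂ ha₂ hR
  have h₂ := resolvent_mul_diagonal d₁ ha₁ hR'
  have key := trace_diagonal_resolvent_comm R (fun i => d₁ i * (a₁ i)⁻¹)
    (fun i => d₂ i * (a₂ i)⁻¹)
  rw [← h₁, ← h₂] at key
  simpa only [← Matrix.diagonal_mul_diagonal, Matrix.mul_assoc] using key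
end

section
/- For every r ∈ (0, 1/10) there exists a constant C = C(r) > 0 such that the following holds. Let t ∈ (0, 10⁻²), M ≥ 1, and K > 0 with t·M ≤ r/2, and let φ : ℝ → ℝ be differentiable with φ'(x) = 0 whenever |x| > t·M, |φ'(x)| ≤ K·t/(t² + x²) for all x, φ(−1) = 0, and φ(1) = 1. Then |∫_{[−r,r]²} ((φ(x) − φ(y))/(x − y))² dx dy − 2·|log t|| ≤ C·(K+1)²·log|log t|. -/
/-!
The energy is compared pointwise with that of the model kernel `modelG t x y`, equal to
`1 / (t + |x| + |y|) ^ 2` when `x` and `y` have opposite signs and to `0` otherwise. Its integral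
over the square is explicit, `2 |log t| + O_r(1)` (`modelG_integral`).

Since `K t / (t² + s²) ≤ 2 K t / (t + s)²` for `s ≥ 0`, increments of `φ` on a half-line are bounded
by those of `s ↦ -2 K t / (t + s)` (`increment_le`). For points on the same side this makes the
difference quotient at most `2 K t / ((t + |x|) (t + |y|))`. For points on opposite sides, put
`S = t + |x| + |y|`. Comparing `φ` with its value at the origin bounds the quotient `q` by
`4 K / S`; comparing it with its values `0` at `-1` and `1` at `1` shows that `q` differs from
`1 / S` by at most `4 K (t / (t + |x|) + t / (t + |y|)) / S`.

Altogether the integrand differs from the model kernel by at most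
`32 (K + 1)² h(x) h(y)`, where `h(x) = √t / (t + |x|) ^ (3/2)` has integral at most `4`
(`pointwise`, `hker_integral_le`). The total error is therefore `O_r((K + 1)²)`, which is enough
because `log |log t| ≥ 1` for `t < 1 / 100`.
-/

open MeasureTheory


/-- The dominating profile `√t / (t + |x|) ^ (3/2)`, with the power `3/2` written as
`s * √s`. Its integral is bounded uniformly in `t`. -/
noncomputable def hker (t x : ℝ) : ℝ := √t / ((t + |x|) * √(t + |x|))

/-- The model kernel: the squared difference quotient of a unit jump at the origin, regularised
at scale `t`. -/
noncomputable def modelG (t x y : ℝ) : ℝ :=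
  if x * y < 0 then 1 / (t + |x| + |y|) ^ 2 else 0

/-! ### Increments of the profile -/

/-- On the half-line `s ≥ 0`, both `φ` and `-φ` grow no faster than `s ↦ -2 K t / (t + s)`. -/
theorem increment_le {t K : ℝ} {φ : ℝ → ℝ} (ht : 0 < t) (hK : 0 < K) (hd : Differentiable ℝ φ)
    (hb : ∀ x : ℝ, |deriv φ x| ≤ K * t / (t ^ 2 + x ^ 2)) {x y : ℝ} (hy : 0 ≤ y) (hxy : y ≤ x) :
    |φ x - φ y| ≤ 2 * K * t * (1 / (t + y) - 1 / (t + x)) := by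
  have key : ∀ s : ℝ, 0 < s → |deriv φ s| ≤ 2 * K * t / (t + s) ^ 2 := by
    intro s hs
    refine (hb s).trans ?_
    rw [div_le_div_iff₀ (by positivity) (by positivity)]
    have : 0 < K * t := by positivity
    nlinarith [mul_nonneg this.le (sq_nonneg (t - s))]
  have hB : ∀ s : ℝ, 0 ≤ s →
      HasDerivAt (fun s => -(2 * K * t) / (t + s)) (2 * K * t / (t + s) ^ 2) s := by
    intro s hs
    have h1 : HasDerivAt (fun s : ℝ => t + s) 1 s := (hasDerivAt_id s).const_add t
    have h2 := (hasDerivAt_const s (-(2 * K * t))).fun_div h1 (by positivity)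
    exact h2.congr_deriv (by ring)
  have mono : ∀ e : ℝ, |e| = 1 →
      MonotoneOn (fun s => -(2 * K * t) / (t + s) - e * φ s) (Set.Ici 0) := by
    intro e he
    have hD : ∀ s : ℝ, 0 ≤ s → HasDerivAt (fun s => -(2 * K * t) / (t + s) - e * φ s)
        (2 * K * t / (t + s) ^ 2 - e * deriv φ s) s := fun s hs =>
      (hB s hs).sub ((hd s).hasDerivAt.const_mul e)
    refine monotoneOn_of_deriv_nonneg (convex_Ici 0)
      (fun s hs => (hD s hs).continuousAt.continuousWithinAt) ?_ ?_
    · intro s hs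
      rw [interior_Ici] at hs
      exact (hD s (le_of_lt hs)).differentiableAt.differentiableWithinAt
    · intro s hs
      rw [interior_Ici] at hs
      rw [(hD s (le_of_lt hs)).deriv]
      have h1 := key s hs
      have h2 : e * deriv φ s ≤ |deriv φ s| := by
        calc _ ≤ |e * deriv φ s| := le_abs_self _
          _ = _ := by rw [abs_mul, he, one_mul]
      linarith
  have h1 := mono 1 (by simp) (Set.mem_Ici.2 hy) (Set.mem_Ici.2 (hy.trans hxy)) hxy
  have h2 := mono (-1) (by simp) (Set.mem_Ici.2 hy) (Set.mem_Ici.2 (hy.trans hxy)) hxy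
  simp only [neg_div] at h1 h2
  rw [abs_le]
  have e1 : 2 * K * t * (1 / (t + y) - 1 / (t + x)) = 2 * K * t / (t + y) - 2 * K * t / (t + x) := by
    ring
  rw [e1]
  constructor <;> linarith

theorem same_side {t K : ℝ} {φ : ℝ → ℝ} (ht : 0 < t) (hK : 0 < K) (hd : Differentiable ℝ φ)
    (hb : ∀ x : ℝ, |deriv φ x| ≤ K * t / (t ^ 2 + x ^ 2)) {x y : ℝ} (hx : 0 ≤ x) (hy : 0 ≤ y) :
    |(φ x - φ y) / (x - y)| ≤ 2 * K * (t / ((t + x) * (t + y))) := by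
  wlog hxy : y ≤ x generalizing x y
  · have := this hy hx (le_of_not_ge hxy)
    rw [← neg_sub (φ x), ← neg_sub x, neg_div_neg_eq, mul_comm (t + y)] at this
    exact this
  rcases hxy.eq_or_lt with rfl | h
  · simp; positivity
  · have h1 := increment_le ht hK hd hb hy hxy
    rw [abs_div, abs_of_pos (sub_pos.2 h), div_le_iff₀ (sub_pos.2 h)]
    refine h1.trans (le_of_eq ?_)
    field_simp
    ring

/-! ### Comparison of the integrands -/

/-- Replaces the opposite-side error weight by a product, since
`(t + x + u) ^ 2 ≥ (t + x) ^ (1/2) * (t + u) ^ (3/2)`. -/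
theorem weight_le {t x u : ℝ} (ht : 0 < t) (hx : 0 ≤ x) (hu : 0 ≤ u) :
    t / (t + x) / (t + x + u) ^ 2 ≤ √t / ((t + x) * √(t + x)) * (√t / ((t + u) * √(t + u))) := by
  obtain ⟨s, hs, hs2⟩ : ∃ s : ℝ, 0 < s ∧ s ^ 2 = t := ⟨√t, by positivity, Real.sq_sqrt ht.le⟩
  obtain ⟨a, ha, ha2⟩ : ∃ s : ℝ, 0 < s ∧ s ^ 2 = t + x :=
    ⟨√(t + x), by positivity, Real.sq_sqrt (by positivity)⟩
  obtain ⟨b, hb, hb2⟩ : ∃ s : ℝ, 0 < s ∧ s ^ 2 = t + u :=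
    ⟨√(t + u), by positivity, Real.sq_sqrt (by positivity)⟩
  have hm : a * b ≤ t + x + u := by nlinarith [sq_nonneg (a - b)]
  have hm2 : b ^ 2 ≤ t + x + u := by linarith
  have h3 : a * b * b ^ 2 ≤ (t + x + u) ^ 2 := by
    rw [sq (t + x + u)]; gcongr
  rw [← ha2, ← hb2, Real.sqrt_sq ha.le, Real.sqrt_sq hb.le, ha2, ← hs2, Real.sqrt_sq hs.le, hs2,
    ← ha2]
  calc t / a ^ 2 / (a ^ 2 + u) ^ 2 ≤ t / a ^ 2 / (a * b * b ^ 2) := by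
        rw [ha2] at *; gcongr
    _ = _ := by rw [← hs2]; field_simp

/-- The square of the same-side bound is below the same product weight, since `t ≤ t + x` and
`t ≤ t + u`. -/
theorem same_weight {t x u : ℝ} (ht : 0 < t) (hx : 0 ≤ x) (hu : 0 ≤ u) :
    (t / ((t + x) * (t + u))) ^ 2 ≤
      √t / ((t + x) * √(t + x)) * (√t / ((t + u) * √(t + u))) := by
  have h1 : ∀ z : ℝ, 0 ≤ z → √t / (t + z) ≤ 1 / √(t + z) := by
    intro z hz
    rw [div_le_div_iff₀ (by positivity) (by positivity), one_mul, ← Real.sqrt_mul ht.le]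
    refine Real.sqrt_le_iff.2 ⟨by positivity, by nlinarith⟩
  have e : (t / ((t + x) * (t + u))) ^ 2 = √t * √t * (√t / (t + x)) * (√t / (t + u))
      / ((t + x) * (t + u)) := by
    have : t = √t * √t := (Real.mul_self_sqrt ht.le).symm
    have h4 : t ^ 2 = √t * √t * √t * √t := by rw [← this, mul_assoc, ← this]; ring
    rw [div_pow, h4]; field_simp
  rw [e]
  calc _ ≤ √t * √t * (1 / √(t + x)) * (1 / √(t + u)) / ((t + x) * (t + u)) := by
        have := h1 x hx
        have := h1 u hu
        gcongr ?_ / _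
        gcongr ?_ * ?_
        gcongr ?_ * ?_
    _ = _ := by field_simp

/-- The opposite-side estimate, for the pair `x > 0 > -u`. It is the only place where the values
of `φ` at `±1` enter. -/
theorem opp_side {t K : ℝ} {φ : ℝ → ℝ} (ht : 0 < t) (hK : 0 < K) (hd : Differentiable ℝ φ)
    (hb : ∀ x : ℝ, |deriv φ x| ≤ K * t / (t ^ 2 + x ^ 2)) (hm : φ (-1) = 0) (h1 : φ 1 = 1)
    {x u : ℝ} (hx : 0 < x) (hu : 0 < u) (hx1 : x ≤ 1) (hu1 : u ≤ 1) :
    |((φ x - φ (-u)) / (x + u)) ^ 2 - 1 / (t + x + u) ^ 2| ≤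
      32 * (K + 1) ^ 2 *
        (√t / ((t + x) * √(t + x)) * (√t / ((t + u) * √(t + u)))) := by
  have hd' : Differentiable ℝ (fun z => φ (-z)) := hd.comp differentiable_neg
  have hb' : ∀ z : ℝ, |deriv (fun z => φ (-z)) z| ≤ K * t / (t ^ 2 + z ^ 2) := by
    intro z
    rw [deriv_comp_neg, abs_neg]
    simpa using hb (-z)
  -- `i1`, `i2` compare with the prescribed values at `±1`; `i3`, `i4` with the value at `0`.
  have i1 := increment_le ht hK hd hb hx.le hx1
  have i2 := increment_le ht hK hd' hb' hu.le hu1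
  have i3 := increment_le ht hK hd hb le_rfl hx.le
  have i4 := increment_le ht hK hd' hb' le_rfl hu.le
  simp only [hm, h1, neg_zero] at i1 i2 i3 i4
  set S := t + x + u with hS
  have hSpos : 0 < S := by positivity
  set q := (φ x - φ (-u)) / (x + u) with hq
  have hqe : φ x - φ (-u) = q * (x + u) := by rw [hq]; field_simp
  have hKt : 0 < 2 * K * t := by positivity
  have j1 : |1 - φ x| ≤ 2 * K * (t / (t + x)) := by
    refine i1.trans ?_
    have : 0 < 2 * K * t * (1 / (t + 1)) := by positivity
    have e : 2 * K * t * (1 / (t + x) - 1 / (t + 1)) = 2 * K * (t / (t + x)) - 2 * K * t * (1 / (t + 1)) := by ring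
    linarith
  have j2 : |φ (-u)| ≤ 2 * K * (t / (t + u)) := by
    rw [zero_sub, abs_neg] at i2
    refine i2.trans ?_
    have : 0 < 2 * K * t * (1 / (t + 1)) := by positivity
    have e : 2 * K * t * (1 / (t + u) - 1 / (t + 1)) = 2 * K * (t / (t + u)) - 2 * K * t * (1 / (t + 1)) := by ring
    linarith
  have hqb : |q| ≤ 4 * K / S := by
    have k1 : |φ x - φ 0| ≤ 2 * K * ((x + u) / S) := by
      refine i3.trans ?_
      have : 2 * K * t * (1 / (t + 0) - 1 / (t + x)) = 2 * K * (x / (t + x)) := by field_simp; ring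
      rw [this]
      have : x / (t + x) ≤ (x + u) / S := by
        rw [div_le_div_iff₀ (by positivity) hSpos, hS]; nlinarith
      gcongr
    have k2 : |φ (-u) - φ 0| ≤ 2 * K * ((x + u) / S) := by
      refine i4.trans ?_
      have : 2 * K * t * (1 / (t + 0) - 1 / (t + u)) = 2 * K * (u / (t + u)) := by field_simp; ring
      rw [this]
      have : u / (t + u) ≤ (x + u) / S := by
        rw [div_le_div_iff₀ (by positivity) hSpos, hS]; nlinarith
      gcongr
    have k3 : |φ x - φ (-u)| ≤ 4 * K / S * (x + u) := by
      have : 4 * K / S * (x + u) = 2 * K * ((x + u) / S) + 2 * K * ((x + u) / S) := by ring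
      rw [this]
      calc |φ x - φ (-u)| = |(φ x - φ 0) - (φ (-u) - φ 0)| := by ring_nf
        _ ≤ _ := abs_sub _ _
        _ ≤ _ := add_le_add k1 k2
    rw [hqe, abs_mul, abs_of_pos (by positivity : 0 < x + u)] at k3
    exact le_of_mul_le_mul_right k3 (by positivity)
  set A := t / (t + x) with hA
  set B := t / (t + u) with hB
  have hA0 : 0 < A := by positivity
  have hB0 : 0 < B := by positivity
  have hSA : t / S ≤ A := by rw [hA, hS]; gcongr t / ?_; linarith
  have hSB : t / S ≤ B := by rw [hB, hS]; gcongr t / ?_; linarith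
  -- Since `S = t + (x + u)`, one has `q * S - 1 = t * q - (1 - φ x) - φ (-u)`.
  have m1 : |q - 1 / S| ≤ 4 * K * (A + B) / S := by
    have e : q - 1 / S = (t * q - (1 - φ x) - φ (-u)) / S := by
      have : t * q - (1 - φ x) - φ (-u) = q * S - 1 := by rw [hS]; linarith
      rw [this]; field_simp
    rw [e, abs_div, abs_of_pos hSpos]
    gcongr
    have : |t * q| ≤ 2 * K * (A + B) := by
      rw [abs_mul, abs_of_pos ht]
      calc t * |q| ≤ t * (4 * K / S) := by gcongr
        _ = 2 * K * (t / S + t / S) := by ring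
        _ ≤ _ := by gcongr
    calc |t * q - (1 - φ x) - φ (-u)| ≤ |t * q| + |1 - φ x| + |φ (-u)| :=
          (abs_sub _ _).trans (by gcongr; exact abs_sub _ _)
      _ ≤ _ := by linarith
  have m2 : |q + 1 / S| ≤ (4 * K + 1) / S := by
    calc |q + 1 / S| ≤ |q| + |1 / S| := abs_add_le _ _
      _ ≤ 4 * K / S + 1 / S := by
        gcongr
        rw [abs_of_pos (by positivity)]
      _ = _ := by ring
  have e : q ^ 2 - 1 / S ^ 2 = (q - 1 / S) * (q + 1 / S) := by
    rw [← one_div_pow, sq_sub_sq, mul_comm]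
  have w1 := weight_le ht hx.le hu.le
  have w2 := weight_le ht hu.le hx.le
  rw [show t + u + x = S by rw [hS]; ring, mul_comm (√t / _)] at w2
  rw [← hS] at w1
  rw [e, abs_mul]
  set W := √t / ((t + x) * √(t + x)) * (√t / ((t + u) * √(t + u)))
  calc |q - 1 / S| * |q + 1 / S| ≤ (4 * K * (A + B) / S) * ((4 * K + 1) / S) := by gcongr
    _ = 4 * K * (4 * K + 1) * (A / S ^ 2 + B / S ^ 2) := by field_simp
    _ ≤ 16 * (K + 1) ^ 2 * (W + W) := by
      have : 4 * K * (4 * K + 1) ≤ 16 * (K + 1) ^ 2 := by nlinarith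
      gcongr ?_ * (?_ + ?_)
    _ = _ := by ring

/-- The comparison of integrands on the whole square. On the diagonal both terms vanish,
as the quotient is `0 / 0 = 0`. -/
theorem pointwise {t K : ℝ} {φ : ℝ → ℝ} (ht : 0 < t) (hK : 0 < K) (hd : Differentiable ℝ φ)
    (hb : ∀ x : ℝ, |deriv φ x| ≤ K * t / (t ^ 2 + x ^ 2)) (hm : φ (-1) = 0) (h1 : φ 1 = 1)
    {x y : ℝ} (hx : |x| ≤ 1) (hy : |y| ≤ 1) :
    |((φ x - φ y) / (x - y)) ^ 2 - modelG t x y| ≤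
      32 * (K + 1) ^ 2 * (hker t x * hker t y) := by
  have hd' : Differentiable ℝ (fun z => φ (-z)) := hd.comp differentiable_neg
  have hb' : ∀ z : ℝ, |deriv (fun z => φ (-z)) z| ≤ K * t / (t ^ 2 + z ^ 2) := by
    intro z
    rw [deriv_comp_neg, abs_neg]
    simpa using hb (-z)
  have same : ∀ q : ℝ, |q| ≤ 2 * K * (t / ((t + |x|) * (t + |y|))) →
      |q ^ 2 - 0| ≤ 32 * (K + 1) ^ 2 * (hker t x * hker t y) := by
    intro q hq
    rw [sub_zero, abs_pow]
    calc |q| ^ 2 ≤ (2 * K * (t / ((t + |x|) * (t + |y|)))) ^ 2 := by gcongr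
      _ = 4 * K ^ 2 * (t / ((t + |x|) * (t + |y|))) ^ 2 := by ring
      _ ≤ 32 * (K + 1) ^ 2 * (hker t x * hker t y) := by
        gcongr
        · norm_num
        · linarith
        · exact same_weight ht (abs_nonneg x) (abs_nonneg y)
  unfold modelG
  split_ifs with h
  · rcases mul_neg_iff.1 h with ⟨h2, h3⟩ | ⟨h2, h3⟩
    · unfold hker
      rw [abs_of_pos h2] at *
      rw [abs_of_neg h3] at *
      have := opp_side ht hK hd hb hm h1 h2 (neg_pos.2 h3) hx hy
      rwa [neg_neg, ← sub_eq_add_neg] at this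
    · unfold hker
      rw [abs_of_pos h3] at *
      rw [abs_of_neg h2] at *
      have := opp_side ht hK hd hb hm h1 h3 (neg_pos.2 h2) hy hx
      rw [neg_neg, ← sub_eq_add_neg] at this
      rw [← neg_sub (φ y), ← neg_sub y, neg_div_neg_eq, add_right_comm t,
        mul_comm (√t / _)]
      exact this
  · rw [not_lt] at h
    apply same
    rcases mul_nonneg_iff.1 h with ⟨h2, h3⟩ | ⟨h2, h3⟩
    · rw [abs_of_nonneg h2, abs_of_nonneg h3]
      exact same_side ht hK hd hb h2 h3
    · rw [abs_of_nonpos h2, abs_of_nonpos h3]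
      have := same_side ht hK hd' hb' (neg_nonneg.2 h2) (neg_nonneg.2 h3)
      simp only [neg_neg] at this
      rw [show -x - -y = -(x - y) by ring, div_neg, abs_neg] at this
      exact this

/-! ### The integral of the model kernel -/

theorem modelG_nonneg {t : ℝ} (x y : ℝ) : 0 ≤ modelG t x y := by
  unfold modelG; split_ifs <;> positivity

theorem modelG_le {t : ℝ} (ht : 0 < t) (x y : ℝ) : modelG t x y ≤ 1 / t ^ 2 := by
  unfold modelG
  have := abs_nonneg x
  have := abs_nonneg y
  split_ifs
  · gcongr; linarith
  · positivity

theorem measurable_modelG (t : ℝ) : Measurable (fun z : ℝ × ℝ => modelG t z.1 z.2) := by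
  unfold modelG
  refine Measurable.ite ?_ (by fun_prop) measurable_const
  exact measurableSet_lt (by fun_prop) measurable_const

theorem intervalIntegrable_modelG {t : ℝ} (ht : 0 < t) (x a b : ℝ) :
    IntervalIntegrable (modelG t x) volume a b := by
  have hm : Measurable (modelG t x) := (measurable_modelG t).comp measurable_prodMk_left
  refine (intervalIntegrable_const (c := 1 / t ^ 2)).mono_fun hm.aestronglyMeasurable ?_
  refine Filter.Eventually.of_forall fun y => ?_
  beta_reduce
  rw [Real.norm_of_nonneg (modelG_nonneg _ _), Real.norm_of_nonneg (by positivity)]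
  exact modelG_le ht x y

theorem modelG_inner_pos {t r x : ℝ} (ht : 0 < t) (hr : 0 < r) (hx : 0 < x) :
    ∫ y in (-r)..r, modelG t x y = 1 / (t + x) - 1 / (t + x + r) := by
  rw [← intervalIntegral.integral_add_adjacent_intervals (b := 0)
    (intervalIntegrable_modelG ht x _ _) (intervalIntegrable_modelG ht x _ _)]
  have h1 : ∫ y in (-r)..0, modelG t x y = 1 / (t + x - 0) - 1 / (t + x - -r) := by
    have hD : ∀ y : ℝ, y ≤ 0 → HasDerivAt (fun y => 1 / (t + x - y)) (1 / (t + x - y) ^ 2) y := by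
      intro y hy
      have h1 : HasDerivAt (fun y : ℝ => t + x - y) (-1) y := (hasDerivAt_id y).const_sub _
      have h2 := (hasDerivAt_const y (1 : ℝ)).fun_div h1 (by linarith)
      exact h2.congr_deriv (by ring)
    refine intervalIntegral.integral_eq_sub_of_hasDerivAt_of_le (by linarith)
      (fun y hy => (hD y hy.2).continuousAt.continuousWithinAt) (fun y hy => ?_)
      (intervalIntegrable_modelG ht x _ _)
    unfold modelG
    rw [if_pos (mul_neg_of_pos_of_neg hx hy.2), abs_of_pos hx, abs_of_neg hy.2, ← sub_eq_add_neg]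
    exact hD y hy.2.le
  have h2 : ∫ y in (0 : ℝ)..r, modelG t x y = 0 := by
    rw [intervalIntegral.integral_congr (g := fun _ => 0)]
    · simp
    · intro y hy
      rw [Set.uIcc_of_le hr.le] at hy
      exact if_neg (not_lt.2 (mul_nonneg hx.le hy.1))
  rw [h1, h2]
  ring

/-- The point `x = 0` is excluded because there the model kernel vanishes identically in `y`. -/
theorem modelG_inner {t r x : ℝ} (ht : 0 < t) (hr : 0 < r) (hx : x ≠ 0) :
    ∫ y in (-r)..r, modelG t x y = 1 / (t + |x|) - 1 / (t + |x| + r) := by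
  rcases hx.lt_or_gt with h | h
  · have e : ∀ y, modelG t x y = modelG t (-x) (-y) := by intro y; simp [modelG]
    simp_rw [e]
    rw [intervalIntegral.integral_comp_neg (modelG t (-x)), neg_neg,
      modelG_inner_pos ht hr (neg_pos.2 h), abs_of_neg h]
  · rw [modelG_inner_pos ht hr h, abs_of_pos h]

theorem integral_even {f : ℝ → ℝ} (hf : Continuous f) (r : ℝ) :
    ∫ x in (-r)..r, f |x| = 2 * ∫ x in (0 : ℝ)..r, f |x| := by
  have hc : Continuous fun x : ℝ => f |x| := hf.comp continuous_abs
  rw [← intervalIntegral.integral_add_adjacent_intervals (b := 0)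
    (hc.intervalIntegrable _ _) (hc.intervalIntegrable _ _)]
  have := intervalIntegral.integral_comp_neg (a := 0) (b := r) (fun x => f |x|)
  simp only [abs_neg, neg_zero] at this
  rw [← this, two_mul]

theorem modelG_integral {t r : ℝ} (ht : 0 < t) (hr : 0 < r) :
    ∫ x in Set.Icc (-r) r, ∫ y in Set.Icc (-r) r, modelG t x y =
      2 * (2 * Real.log (t + r) - Real.log t - Real.log (t + r + r)) := by
  have hle : -r ≤ r := by linarith
  have hc : Continuous fun x : ℝ => 1 / (t + |x|) - 1 / (t + |x| + r) := by
    refine (Continuous.div (by fun_prop) (by fun_prop) fun x => ?_).sub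
      (Continuous.div (by fun_prop) (by fun_prop) fun x => ?_) <;> positivity
  simp_rw [integral_Icc_eq_integral_Ioc, ← intervalIntegral.integral_of_le hle]
  rw [intervalIntegral.integral_congr_ae
    (g := fun x => 1 / (t + |x|) - 1 / (t + |x| + r))]
  swap
  · have : ∀ᵐ x : ℝ, x ≠ 0 := by simp [ae_iff]
    filter_upwards [this] with x hx _ using modelG_inner ht hr hx
  have h1 : ∫ x in (-r)..r, (1 / (t + |x|) - 1 / (t + |x| + r)) =
      2 * ∫ x in (0 : ℝ)..r, (1 / (t + |x|) - 1 / (t + |x| + r)) := by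
    have := integral_even (f := fun x => 1 / (t + |x|) - 1 / (t + |x| + r)) hc r
    simpa only [abs_abs] using this
  rw [h1]
  congr 1
  have hD : ∀ x : ℝ, 0 ≤ x → HasDerivAt (fun x => Real.log (t + x) - Real.log (t + x + r))
      (1 / (t + x) - 1 / (t + x + r)) x := by
    intro x hx
    have h1 : HasDerivAt (fun x : ℝ => t + x) 1 x := (hasDerivAt_id x).const_add _
    exact (h1.log (by positivity)).sub ((h1.add_const r).log (by positivity))
  rw [intervalIntegral.integral_eq_sub_of_hasDerivAt
    (f := fun x => Real.log (t + x) - Real.log (t + x + r)) _ (hc.intervalIntegrable _ _)]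
  · simp only [add_zero]; ring
  · intro x hx
    rw [Set.uIcc_of_le hr.le] at hx
    simp only [abs_of_nonneg hx.1]
    exact hD x hx.1

/-! ### Integrating the error -/

theorem continuous_hker {t : ℝ} (ht : 0 < t) : Continuous (hker t) := by
  unfold hker
  refine Continuous.div (by fun_prop) (by fun_prop) fun x => ?_
  positivity

theorem hker_nonneg {t : ℝ} (ht : 0 < t) (x : ℝ) : 0 ≤ hker t x := by
  unfold hker; positivity

theorem hker_integral_le {t r : ℝ} (ht : 0 < t) (hr : 0 < r) :
    ∫ x in Set.Icc (-r) r, hker t x ≤ 4 := by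
  have hle : -r ≤ r := by linarith
  rw [integral_Icc_eq_integral_Ioc, ← intervalIntegral.integral_of_le hle]
  have h1 := integral_even (continuous_hker ht) r
  simp only [hker, abs_abs] at h1
  simp only [hker]
  rw [h1]
  have hD : ∀ x : ℝ, 0 ≤ x → HasDerivAt (fun x => -(2 * √t) / √(t + x))
      (√t / ((t + x) * √(t + x))) x := by
    intro x hx
    have h1 : HasDerivAt (fun x : ℝ => t + x) 1 x := (hasDerivAt_id x).const_add _
    have h2 := (hasDerivAt_const x (-(2 * √t))).fun_div (h1.sqrt (by positivity)) (by positivity)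
    refine h2.congr_deriv ?_
    rw [Real.sq_sqrt (by positivity)]
    field_simp
    ring
  have hi : IntervalIntegrable (fun x => √t / ((t + |x|) * √(t + |x|))) volume 0 r :=
    (continuous_hker ht).intervalIntegrable _ _
  rw [intervalIntegral.integral_eq_sub_of_hasDerivAt (f := fun x => -(2 * √t) / √(t + x)) _
    hi]
  · have h2 : 0 ≤ 2 * √t / √(t + r) := by positivity
    have h3 : 2 * √t / √t = 2 := by field_simp
    simp only [add_zero, neg_div]
    linarith
  · intro x hx
    rw [Set.uIcc_of_le hr.le] at hx
    simp only [abs_of_nonneg hx.1]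
    exact hD x hx.1

theorem energy_close {t K r : ℝ} {φ : ℝ → ℝ} (ht : 0 < t) (hK : 0 < K) (hr : 0 < r) (hr1 : r ≤ 1)
    (hd : Differentiable ℝ φ)
    (hb : ∀ x : ℝ, |deriv φ x| ≤ K * t / (t ^ 2 + x ^ 2)) (hm : φ (-1) = 0) (h1 : φ 1 = 1) :
    |(∫ x in Set.Icc (-r) r, ∫ y in Set.Icc (-r) r, ((φ x - φ y) / (x - y)) ^ 2) -
      ∫ x in Set.Icc (-r) r, ∫ y in Set.Icc (-r) r, modelG t x y| ≤ 512 * (K + 1) ^ 2 := by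
  set μ := (volume : Measure ℝ).restrict (Set.Icc (-r) r) with hμ
  have hφ : Measurable φ := hd.continuous.measurable
  have hFm : Measurable fun z : ℝ × ℝ => ((φ z.1 - φ z.2) / (z.1 - z.2)) ^ 2 := by fun_prop
  have hGm := measurable_modelG t
  have hk : Integrable (hker t) μ := (continuous_hker ht).continuousOn.integrableOn_Icc
  have hkk : Integrable (fun z : ℝ × ℝ => 32 * (K + 1) ^ 2 * (hker t z.1 * hker t z.2))
      (μ.prod μ) := (hk.mul_prod hk).const_mul _
  have hae : ∀ᵐ z ∂μ.prod μ,
      ‖((φ z.1 - φ z.2) / (z.1 - z.2)) ^ 2 - modelG t z.1 z.2‖ ≤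
        32 * (K + 1) ^ 2 * (hker t z.1 * hker t z.2) := by
    rw [hμ, Measure.prod_restrict]
    filter_upwards [ae_restrict_mem (measurableSet_Icc.prod measurableSet_Icc)] with z hz
    exact pointwise ht hK hd hb hm h1 ((abs_le.2 hz.1).trans hr1) ((abs_le.2 hz.2).trans hr1)
  have hG : Integrable (fun z : ℝ × ℝ => modelG t z.1 z.2) (μ.prod μ) := by
    refine (integrable_const (1 / t ^ 2)).mono' hGm.aestronglyMeasurable ?_
    refine Filter.Eventually.of_forall fun z => ?_
    rw [Real.norm_of_nonneg (modelG_nonneg _ _)]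
    exact modelG_le ht _ _
  -- Integrability of the energy density is inherited from the model and the dominating product.
  have hFG := hkk.mono' (hFm.sub hGm).aestronglyMeasurable hae
  have hF : Integrable (fun z : ℝ × ℝ => ((φ z.1 - φ z.2) / (z.1 - z.2)) ^ 2) (μ.prod μ) := by
    simpa using hFG.add hG
  rw [← integral_prod _ hF, ← integral_prod _ hG, ← integral_sub hF hG]
  refine (norm_integral_le_of_norm_le hkk hae).trans ?_
  rw [integral_const_mul, integral_prod_mul]
  have h4 := hker_integral_le ht hr
  have h0 : 0 ≤ ∫ x, hker t x ∂μ := integral_nonneg fun x => hker_nonneg ht x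
  calc 32 * (K + 1) ^ 2 * ((∫ x, hker t x ∂μ) * ∫ x, hker t x ∂μ)
      ≤ 32 * (K + 1) ^ 2 * (4 * 4) := by gcongr
    _ = _ := by ring

theorem one_le_loglog {t : ℝ} (ht : 0 < t) (ht' : t < 1 / 100) : 1 ≤ Real.log |Real.log t| := by
  have he : Real.exp 1 < 3 := Real.exp_one_lt_three
  have h1 : Real.log t ≤ -3 := by
    rw [Real.log_le_iff_le_exp ht, Real.exp_neg]
    have : Real.exp 3 ≤ 27 := by
      have : Real.exp 3 = Real.exp 1 ^ 3 := by rw [← Real.exp_nat_mul]; norm_num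
      rw [this]
      calc Real.exp 1 ^ 3 ≤ 3 ^ 3 := by gcongr
        _ = 27 := by norm_num
    have h2 : (27 : ℝ)⁻¹ ≤ (Real.exp 3)⁻¹ := by gcongr
    linarith
  rw [abs_of_nonpos (by linarith), Real.le_log_iff_exp_le (by linarith)]
  linarith

theorem stmt14 (r : ℝ) (hr : r ∈ Set.Ioo (0 : ℝ) (1 / 10)) :
    ∃ C : ℝ, 0 < C ∧
      ∀ (t M K : ℝ) (φ : ℝ → ℝ),
        t ∈ Set.Ioo (0 : ℝ) (1 / 100) → 1 ≤ M → 0 < K → t * M ≤ r / 2 →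
        Differentiable ℝ φ →
        (∀ x : ℝ, t * M < |x| → deriv φ x = 0) →
        (∀ x : ℝ, |deriv φ x| ≤ K * t / (t ^ 2 + x ^ 2)) →
        φ (-1) = 0 → φ 1 = 1 →
        abs ((∫ x in Set.Icc (-r) r, ∫ y in Set.Icc (-r) r, ((φ x - φ y) / (x - y)) ^ 2) -
            2 * |Real.log t|) ≤ C * (K + 1) ^ 2 * Real.log |Real.log t| := by
  obtain ⟨hr0, hr1⟩ := hr
  have hlr : Real.log r < 0 := Real.log_neg hr0 (by linarith)
  refine ⟨512 - 4 * Real.log r, by linarith, ?_⟩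
  intro t M K φ ⟨ht0, ht1⟩ _ hK _ hd _ hb hm h1
  have hE := energy_close ht0 hK hr0 (by linarith) hd hb hm h1
  rw [modelG_integral ht0 hr0] at hE
  have hlt : Real.log t < 0 := Real.log_neg ht0 (by linarith)
  have a1 : Real.log (t + r) ≤ 0 := Real.log_nonpos (by linarith) (by linarith)
  have a2 : Real.log (t + r + r) ≤ 0 := Real.log_nonpos (by linarith) (by linarith)
  have a3 : Real.log r ≤ Real.log (t + r) := Real.log_le_log hr0 (by linarith)
  have a4 : Real.log r ≤ Real.log (t + r + r) := Real.log_le_log hr0 (by linarith)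
  have hL := one_le_loglog ht0 ht1
  have hK1 : 1 ≤ (K + 1) ^ 2 := by nlinarith
  have hfin : 512 * (K + 1) ^ 2 - 4 * Real.log r ≤
      (512 - 4 * Real.log r) * (K + 1) ^ 2 * Real.log |Real.log t| := by
    calc 512 * (K + 1) ^ 2 - 4 * Real.log r
        ≤ (512 - 4 * Real.log r) * (K + 1) ^ 2 * 1 := by nlinarith
      _ ≤ _ := by
        have : 0 ≤ (512 - 4 * Real.log r) * (K + 1) ^ 2 :=
          mul_nonneg (by linarith) (sq_nonneg _)
        gcongr
  refine le_trans ?_ hfin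
  rw [abs_of_neg hlt]
  rw [abs_le] at hE ⊢
  constructor <;> linarith [hE.1, hE.2]
end

section
/- Let F : ℝ → Matrix(n, n, ℝ) take symmetric values, let λ : ℝ → ℝ and v : ℝ → ℝⁿ, and suppose F, λ, v are all differentiable at t₀ and satisfy F(t)·v(t) = λ(t)·v(t) and ‖v(t)‖₂ = 1 for all t in a neighborhood of t₀. Then λ'(t₀) = v(t₀)ᵀ · F'(t₀) · v(t₀). -/
/-!
Differentiating `F v = λ v` at `t₀` gives `F' v + F v' = λ' v + λ v'`. Pair this with `v`: since `F`
is symmetric, `v ⬝ᵥ F v' = F v ⬝ᵥ v' = λ (v ⬝ᵥ v')`, so the terms in `v'` cancel, and `v ⬝ᵥ v = 1`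
leaves `v ⬝ᵥ F' v = λ'`.
-/

open Matrix

theorem stmt19 (n : ℕ) (F : ℝ → Matrix (Fin n) (Fin n) ℝ) (lam : ℝ → ℝ)
    (v : ℝ → Fin n → ℝ) (t₀ : ℝ) (F' : Matrix (Fin n) (Fin n) ℝ) (lam' : ℝ)
    (v' : Fin n → ℝ)
    (hFsymm : ∀ t, (F t).IsSymm)
    (hF : ∀ i j, HasDerivAt (fun t => F t i j) (F' i j) t₀)
    (hlam : HasDerivAt lam lam' t₀)
    (hv : ∀ i, HasDerivAt (fun t => v t i) (v' i) t₀)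
    (heig : ∀ᶠ t in nhds t₀, (F t).mulVec (v t) = lam t • v t)
    (hnorm : ∀ᶠ t in nhds t₀, ∑ i, v t i ^ 2 = 1) :
    lam' = v t₀ ⬝ᵥ F'.mulVec (v t₀) := by
  -- Differentiate the eigenvalue equation at `t₀`, coordinate by coordinate.
  have hderiv : F' *ᵥ v t₀ + F t₀ *ᵥ v' = lam' • v t₀ + lam t₀ • v' := by
    ext i
    have hL : HasDerivAt (fun t => ∑ j, F t i j * v t j)
        (∑ j, (F' i j * v t₀ j + F t₀ i j * v' j)) t₀ :=
      HasDerivAt.fun_sum fun j _ => (hF i j).mul (hv j)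
    have hR : HasDerivAt (fun t => lam t * v t i) (lam' * v t₀ i + lam t₀ * v' i) t₀ :=
      hlam.mul (hv i)
    have hEq : (fun t => lam t * v t i) =ᶠ[nhds t₀] fun t => ∑ j, F t i j * v t j := by
      filter_upwards [heig] with t ht
      exact (congrFun ht i).symm
    have h := (hL.congr_of_eventuallyEq hEq).unique hR
    simpa [Matrix.mulVec, dotProduct, Finset.sum_add_distrib] using h
  have hunit : v t₀ ⬝ᵥ v t₀ = 1 := by
    simpa [dotProduct, sq] using hnorm.self_of_nhds
  -- By symmetry of `F t₀`, the terms containing `v'` cancel after pairing with `v t₀`.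
  have hcancel : v t₀ ⬝ᵥ F t₀ *ᵥ v' = lam t₀ * (v t₀ ⬝ᵥ v') := by
    rw [dotProduct_mulVec, ← mulVec_transpose, (hFsymm t₀).eq, heig.self_of_nhds,
      smul_dotProduct, smul_eq_mul]
  have h := congrArg (fun w => v t₀ ⬝ᵥ w) hderiv
  simp only [dotProduct_add, dotProduct_smul, smul_eq_mul, hcancel, hunit] at h
  linarith
end
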